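/- Let Ω be a bounded open convex domain in ℝⁿ (n ≥ 2). Suppose F : Ω × (−∞,0) → ℝ is continuous and non-decreasing in its second argument, and there are constants A > 0, α ≥ 0, β ≥ n+1 such that 0 < F(x,t) ≤ A·d_x^{β−n−1}·|t|^{−α} for all x ∈ Ω and t < 0. Let γ₁ = (β−n+1)/(n+α) if β < α + 2n − 1, and let γ₁ be any number in (0,1) if β ≥ α + 2n − 1. Then every classical solution u of det D²u = F(x,u) in Ω with u = 0 on ∂Ω is γ₁-Hölder continuous on the closure of Ω, with C^{γ₁}-norm bounded by a constant depending only on α, β, A, diam Ω and n. -/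

import Mathlib

/-- The determinant of the Hessian matrix of `u` at `x`. -/
noncomputable def hessianDet {n : ℕ} (u : EuclideanSpace ℝ (Fin n) → ℝ)
    (x : EuclideanSpace ℝ (Fin n)) : ℝ :=
  (Matrix.of fun i j : Fin n =>
    iteratedFDeriv ℝ 2 u x ![EuclideanSpace.single i (1 : ℝ), EuclideanSpace.single j (1 : ℝ)]).det

/-- `u` is a classical solution of `det D²u = F(x,u)` in `Ω`, `u = 0` on `∂Ω`. -/
def IsClassicalSolution {n : ℕ} (Ω : Set (EuclideanSpace ℝ (Fin n)))
    (F : EuclideanSpace ℝ (Fin n) → ℝ → ℝ) (u : EuclideanSpace ℝ (Fin n) → ℝ) : Prop :=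
  ContinuousOn u (closure Ω) ∧ ConvexOn ℝ Ω u ∧ ContDiffOn ℝ 2 u Ω ∧
    (∀ x ∈ Ω, u x < 0) ∧ (∀ x ∈ frontier Ω, u x = 0) ∧
    ∀ x ∈ Ω, hessianDet u x = F x (u x)

/-- `F` is continuous on `Ω × (-∞,0)`, non-decreasing in its second argument, and satisfies
`0 < F(x,t) ≤ A d_x^{β-n-1} |t|^{-α}`. -/
def SatisfiesFCond {n : ℕ} (Ω : Set (EuclideanSpace ℝ (Fin n)))
    (F : EuclideanSpace ℝ (Fin n) → ℝ → ℝ) (A α β : ℝ) : Prop :=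
  ContinuousOn (fun p : EuclideanSpace ℝ (Fin n) × ℝ => F p.1 p.2) (Ω ×ˢ Set.Iio (0 : ℝ)) ∧
    (∀ x ∈ Ω, ∀ s t : ℝ, s ≤ t → t < 0 → F x s ≤ F x t) ∧
    ∀ x ∈ Ω, ∀ t : ℝ, t < 0 →
      0 < F x t ∧ F x t ≤ A * Metric.infDist x (frontier Ω) ^ (β - n - 1) * |t| ^ (-α)

/-!
The estimate is one of boundary growth. At a boundary point `p` with inner unit normal `e`, let
`s` be the height `⟪e, y - p⟫` and `a` the tangential part of `y - p`. For large `K` the barrier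
`v = M s ^ γ (|a|² - K)` satisfies `D²v ≥ M s ^ (γ - 2) (σ² + s² |ξ'|²)` in a direction with
height `σ` and tangential part `ξ'`, whence `det D²v ≥ (M s ^ γ) ^ n / s²`. Where `u - v` has a
negative interior minimum, `det D²u ≥ det D²v` while `|u| ≥ M s ^ γ` and `d ≤ s` bound `det D²u`
from above; together they force `M ^ (n + α) ≤ A s ^ (β - n + 1 - (n + α) γ)`, which fails for
large `M`. So `v ≤ u`, that is, `|u y| ≤ C |y - p| ^ γ` for all boundary points `p`.

For the Hölder bound, prolong the segment from `y` to `x` until it leaves the domain at a point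
`z`, say at `T |x - y|` from `y` with `T ≥ 1`. Convexity and `u z = 0` give
`u x - u y ≤ |u y| / T ≤ C T ^ (γ - 1) |x - y| ^ γ`.
-/

open Filter Topology
open scoped RealInnerProductSpace

section Determinant

open Matrix

variable {ι : Type*} [Fintype ι] [DecidableEq ι]

lemma pow_card_le_det_of_isHermitian {H : Matrix ι ι ℝ} (hH : H.IsHermitian) {c : ℝ} (hc : 0 ≤ c)
    (h : ∀ v : ι → ℝ, c * (v ⬝ᵥ v) ≤ v ⬝ᵥ (H *ᵥ v)) : c ^ Fintype.card ι ≤ H.det := by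
  have hEigen (i : ι) : c ≤ hH.eigenvalues i := by
    have hUnit : (hH.eigenvectorBasis i).ofLp ⬝ᵥ (hH.eigenvectorBasis i).ofLp = 1 := by
      have hNorm := EuclideanSpace.real_norm_sq_eq (hH.eigenvectorBasis i)
      rw [hH.eigenvectorBasis.orthonormal.1 i, one_pow] at hNorm
      simpa only [dotProduct, ← sq] using hNorm.symm
    have hQuad := h (hH.eigenvectorBasis i).ofLp
    rwa [hH.mulVec_eigenvectorBasis i, dotProduct_smul, hUnit, mul_one, smul_eq_mul,
      mul_one] at hQuad
  calc c ^ Fintype.card ι = ∏ _i : ι, c := by simp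
    _ ≤ ∏ i, hH.eigenvalues i := Finset.prod_le_prod (fun _ _ => hc) (fun i _ => hEigen i)
    _ = H.det := by simp [hH.det_eq_prod_eigenvalues]

lemma pow_card_le_det_sq_mul_det {H T : Matrix ι ι ℝ} (hH : H.IsHermitian) {c : ℝ} (hc : 0 ≤ c)
    (h : ∀ v : ι → ℝ, c * (v ⬝ᵥ v) ≤ (T *ᵥ v) ⬝ᵥ (H *ᵥ (T *ᵥ v))) :
    c ^ Fintype.card ι ≤ T.det ^ 2 * H.det := by
  have hCongr : (Tᵀ * H * T).IsHermitian := by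
    simpa only [conjTranspose_eq_transpose_of_trivial] using
      isHermitian_conjTranspose_mul_mul T hH
  have hDet := pow_card_le_det_of_isHermitian hCongr hc fun v => by
    simpa only [← mulVec_mulVec, dotProduct_mulVec v, vecMul_transpose] using h v
  calc c ^ Fintype.card ι ≤ (Tᵀ * H * T).det := hDet
    _ = T.det ^ 2 * H.det := by rw [det_mul, det_mul, det_transpose]; ring

-- The substitution `v ↦ v + (s - 1) (e ⬝ᵥ v) e`, of determinant `s`, makes the form isotropic.
lemma pow_card_le_sq_mul_det_of_anisotropic {H : Matrix ι ι ℝ} (hH : H.IsHermitian) {e : ι → ℝ}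
    (he : e ⬝ᵥ e = 1) {s κ : ℝ} (hκ : 0 ≤ κ)
    (h : ∀ v : ι → ℝ,
      κ * ((e ⬝ᵥ v) ^ 2 + s ^ 2 * (v ⬝ᵥ v - (e ⬝ᵥ v) ^ 2)) ≤ v ⬝ᵥ (H *ᵥ v)) :
    (κ * s ^ 2) ^ Fintype.card ι ≤ s ^ 2 * H.det := by
  set T : Matrix ι ι ℝ := 1 + vecMulVec ((s - 1) • e) e with hT
  have hTdet : T.det = s := by
    rw [hT, vecMulVec_eq Unit, det_one_add_replicateCol_mul_replicateRow, dotProduct_smul, he,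
      smul_eq_mul, mul_one, add_sub_cancel]
  have hTv (v : ι → ℝ) : T *ᵥ v = v + ((s - 1) * (e ⬝ᵥ v)) • e := by
    rw [hT, add_mulVec, one_mulVec, vecMulVec_mulVec, op_smul_eq_smul, smul_smul, mul_comm]
  rw [← hTdet]
  refine pow_card_le_det_sq_mul_det hH (by positivity) fun v => ?_
  refine le_trans (le_of_eq ?_) (h (T *ᵥ v))
  rw [hTdet, hTv]
  simp only [dotProduct_add, add_dotProduct, dotProduct_smul, smul_dotProduct, he, smul_eq_mul,
    dotProduct_comm v e]
  ring

end Determinant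

section SecondDerivative

lemma nonneg_of_isLocalMin_of_hasDerivAt {f f' : ℝ → ℝ} {f'' x : ℝ} (hmin : IsLocalMin f x)
    (hf : ∀ᶠ t in 𝓝 x, HasDerivAt f (f' t) t) (hf' : HasDerivAt f' f'' x) : 0 ≤ f'' := by
  by_contra! hneg
  have hDeriv : deriv f =ᶠ[𝓝 x] f' := hf.mono fun _ => HasDerivAt.deriv
  have hSecond : deriv (deriv f) x = f'' := hDeriv.deriv_eq.trans hf'.deriv
  have hmax : IsLocalMax f x := isLocalMax_of_deriv_deriv_neg (hSecond ▸ hneg)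
    hmin.deriv_eq_zero hf.self_of_nhds.continuousAt
  have hconst : f =ᶠ[𝓝 x] fun _ => f x := by
    filter_upwards [hmax, hmin] with t hle hge using le_antisymm hle hge
  have hzero : deriv (deriv f) x = 0 := by
    simpa using hconst.deriv.deriv_eq
  exact hneg.ne (hSecond.symm.trans hzero)

variable {E : Type*} [NormedAddCommGroup E] [NormedSpace ℝ E]

lemma hasDerivAt_add_smul (x ξ : E) (t : ℝ) : HasDerivAt (fun r : ℝ => x + r • ξ) ξ t := by
  simpa using ((hasDerivAt_id t).smul_const ξ).const_add x

lemma tendsto_add_smul_zero (x ξ : E) : Tendsto (fun t : ℝ => x + t • ξ) (𝓝 0) (𝓝 x) := by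
  simpa using (hasDerivAt_add_smul x ξ 0).continuousAt.tendsto

lemma eventually_hasDerivAt_comp_add_smul {u : E → ℝ} {x : E} (hu : ContDiffAt ℝ 2 u x) (ξ : E) :
    ∀ᶠ t in 𝓝 (0 : ℝ),
      HasDerivAt (fun r : ℝ => u (x + r • ξ)) (fderiv ℝ u (x + t • ξ) ξ) t := by
  filter_upwards [(tendsto_add_smul_zero x ξ).eventually (hu.eventually (by simp))] with t ht
  exact (ht.differentiableAt (by simp)).hasFDerivAt.comp_hasDerivAt t (hasDerivAt_add_smul x ξ t)

lemma hasDerivAt_fderiv_comp_add_smul {u : E → ℝ} {x : E} (hu : ContDiffAt ℝ 2 u x) (ξ : E) :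
    HasDerivAt (fun t : ℝ => fderiv ℝ u (x + t • ξ) ξ) (iteratedFDeriv ℝ 2 u x ![ξ, ξ]) 0 := by
  have hDiff : DifferentiableAt ℝ (fderiv ℝ u) x :=
    (hu.fderiv_right (m := 1) (by norm_num)).differentiableAt one_ne_zero
  have hLine : HasDerivAt (fun t : ℝ => fderiv ℝ u (x + t • ξ)) (fderiv ℝ (fderiv ℝ u) x ξ) 0 :=
    hDiff.hasFDerivAt.comp_hasDerivAt_of_eq 0 (hasDerivAt_add_smul x ξ 0) (by simp)
  rw [iteratedFDeriv_two_apply]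
  exact (ContinuousLinearMap.apply ℝ ℝ ξ).hasFDerivAt.comp_hasDerivAt 0 hLine

lemma le_iteratedFDeriv_two_of_isLocalMin_sub {u v : E → ℝ} {x ξ : E} {φ : ℝ → ℝ} {c : ℝ}
    (hu : ContDiffAt ℝ 2 u x) (hmin : IsLocalMin (fun y => u y - v y) x)
    (hv : ∀ᶠ t in 𝓝 (0 : ℝ), HasDerivAt (fun r : ℝ => v (x + r • ξ)) (φ t) t)
    (hφ : HasDerivAt φ c 0) : c ≤ iteratedFDeriv ℝ 2 u x ![ξ, ξ] := by
  have hLine : IsLocalMin (fun t : ℝ => u (x + t • ξ) - v (x + t • ξ)) 0 := by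
    filter_upwards [(tendsto_add_smul_zero x ξ).eventually hmin] with t ht
    simpa using ht
  refine sub_nonneg.1 (nonneg_of_isLocalMin_of_hasDerivAt hLine ?_
    ((hasDerivAt_fderiv_comp_add_smul hu ξ).sub hφ))
  filter_upwards [eventually_hasDerivAt_comp_add_smul hu ξ, hv] with t hut hvt
    using hut.sub hvt

end SecondDerivative

section Hessian

open Matrix

variable {n : ℕ} {u : EuclideanSpace ℝ (Fin n) → ℝ} {x : EuclideanSpace ℝ (Fin n)}

/-- The Hessian matrix of `u` at `x` in the standard basis; its determinant is `hessianDet u x`. -/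
noncomputable def hessianMatrix (u : EuclideanSpace ℝ (Fin n) → ℝ)
    (x : EuclideanSpace ℝ (Fin n)) : Matrix (Fin n) (Fin n) ℝ :=
  Matrix.of fun i j => iteratedFDeriv ℝ 2 u x
    ![EuclideanSpace.single i (1 : ℝ), EuclideanSpace.single j (1 : ℝ)]

lemma isHermitian_hessianMatrix (hu : ContDiffAt ℝ 2 u x) : (hessianMatrix u x).IsHermitian := by
  ext i j
  simpa [hessianMatrix, iteratedFDeriv_two_apply] using
    hu.isSymmSndFDerivAt (by simp) (EuclideanSpace.single j 1) (EuclideanSpace.single i 1)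

lemma dotProduct_hessianMatrix_mulVec (v : Fin n → ℝ) :
    v ⬝ᵥ (hessianMatrix u x *ᵥ v) =
      iteratedFDeriv ℝ 2 u x ![WithLp.toLp 2 v, WithLp.toLp 2 v] := by
  have hv : (WithLp.toLp 2 v : EuclideanSpace ℝ (Fin n)) =
      ∑ i, v i • EuclideanSpace.single i (1 : ℝ) := by
    ext j
    simp [Pi.single_apply]
  rw [iteratedFDeriv_two_apply, cons_val_zero, cons_val_one, hv]
  simp only [hessianMatrix, map_sum, map_smul, _root_.sum_apply, _root_.smul_apply, smul_eq_mul,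
    dotProduct, mulVec, of_apply, iteratedFDeriv_two_apply, cons_val_zero, cons_val_one,
    Finset.mul_sum]
  rw [Finset.sum_comm]
  exact Finset.sum_congr rfl fun i _ => Finset.sum_congr rfl fun j _ => by ring

end Hessian

section Barrier

variable {E : Type*} [NormedAddCommGroup E] [InnerProductSpace ℝ E]

/-- The orthogonal projection onto the hyperplane `e⊥`, giving the component of a vector tangential
to a boundary with normal `e`. -/
noncomputable abbrev tangentialProj (e : E) : E →L[ℝ] E := (ℝ ∙ e)ᗮ.starProjection

lemma norm_tangentialProj_sq {e : E} (he : ‖e‖ = 1) (ξ : E) :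
    ‖tangentialProj e ξ‖ ^ 2 = ‖ξ‖ ^ 2 - ⟪e, ξ⟫ ^ 2 := by
  have hPythagoras := Submodule.norm_sq_eq_add_norm_sq_starProjection ξ (ℝ ∙ e)
  rw [Submodule.starProjection_unit_singleton ℝ he, norm_smul, he, mul_one, Real.norm_eq_abs,
    sq_abs] at hPythagoras
  linarith

/-- The lower barrier `M s ^ γ (|a|² - K)` at a boundary point `p` with inner unit normal `e`,
where `s` is the height of `y` above the hyperplane through `p` orthogonal to `e` and `a` is the
tangential part of `y - p`. It is meant for `0 ≤ s`, where the real power is not a junk value. -/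
noncomputable def barrier (p e : E) (γ K M : ℝ) (y : E) : ℝ :=
  ⟪e, y - p⟫ ^ γ * (M * (‖tangentialProj e (y - p)‖ ^ 2 - K))

variable {p e : E} {γ K M : ℝ}

lemma continuous_barrier (hγ : 0 ≤ γ) : Continuous (barrier p e γ K M) := by
  have hHeight : Continuous fun y : E => ⟪e, y - p⟫ ^ γ :=
    Continuous.rpow_const (by fun_prop) fun _ => Or.inr hγ
  exact hHeight.mul (by fun_prop)

lemma barrier_le_neg {y : E} (hM : 0 ≤ M) (hs : 0 ≤ ⟪e, y - p⟫)
    (hK : ‖y - p‖ ^ 2 + 1 ≤ K) : barrier p e γ K M y ≤ -(M * ⟪e, y - p⟫ ^ γ) := by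
  have hProj : ‖tangentialProj e (y - p)‖ ^ 2 ≤ ‖y - p‖ ^ 2 := by
    gcongr
    exact Submodule.norm_starProjection_apply_le _ _
  have hProd : 0 ≤ M * ⟪e, y - p⟫ ^ γ := by positivity
  calc barrier p e γ K M y
      = M * ⟪e, y - p⟫ ^ γ * (‖tangentialProj e (y - p)‖ ^ 2 - K) := by unfold barrier; ring
    _ ≤ M * ⟪e, y - p⟫ ^ γ * (-1) := mul_le_mul_of_nonneg_left (by linarith) hProd
    _ = -(M * ⟪e, y - p⟫ ^ γ) := by ring

lemma neg_barrier_le {y : E} (hM : 0 ≤ M) (hK : 0 ≤ K) (hγ : 0 ≤ γ) (he : ‖e‖ = 1)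
    (hs : 0 ≤ ⟪e, y - p⟫) : -barrier p e γ K M y ≤ M * K * ‖y - p‖ ^ γ := by
  have hHeight : ⟪e, y - p⟫ ≤ ‖y - p‖ := by
    simpa [he] using real_inner_le_norm e (y - p)
  calc -barrier p e γ K M y
      = M * ⟪e, y - p⟫ ^ γ * (K - ‖tangentialProj e (y - p)‖ ^ 2) := by unfold barrier; ring
    _ ≤ M * ⟪e, y - p⟫ ^ γ * K := by gcongr; linarith [sq_nonneg ‖tangentialProj e (y - p)‖]
    _ ≤ M * ‖y - p‖ ^ γ * K := by gcongr
    _ = M * K * ‖y - p‖ ^ γ := by ring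

lemma barrier_add_smul (x ξ : E) (t : ℝ) : barrier p e γ K M (x + t • ξ) =
    (⟪e, x - p⟫ + t * ⟪e, ξ⟫) ^ γ *
      (M * (‖tangentialProj e (x - p) + t • tangentialProj e ξ‖ ^ 2 - K)) := by
  rw [barrier, add_sub_right_comm, inner_add_right, real_inner_smul_right, map_add, map_smul]

lemma hasDerivAt_affine_rpow_mul {s σ t g' : ℝ} (γ : ℝ) {g : ℝ → ℝ} (hst : s + t * σ ≠ 0)
    (hg : HasDerivAt g g' t) : HasDerivAt (fun r => (s + r * σ) ^ γ * g r)
      (σ * γ * ((s + t * σ) ^ (γ - 1) * g t) + (s + t * σ) ^ γ * g') t := by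
  have hAffine : HasDerivAt (fun r => s + r * σ) σ t := by
    simpa using ((hasDerivAt_id t).mul_const σ).const_add s
  exact ((hAffine.rpow_const (p := γ) (Or.inl hst)).fun_mul hg).congr_deriv (by ring)

lemma hasDerivAt_deriv_affine_rpow_mul {s σ g'' : ℝ} (γ : ℝ) {g g' : ℝ → ℝ} (hs : 0 < s)
    (hg : HasDerivAt g (g' 0) 0) (hg' : HasDerivAt g' g'' 0) :
    HasDerivAt (fun t => σ * γ * ((s + t * σ) ^ (γ - 1) * g t) + (s + t * σ) ^ γ * g' t)
      (s ^ (γ - 2) * (γ * (γ - 1) * σ ^ 2 * g 0 + 2 * γ * s * σ * g' 0 + s ^ 2 * g'')) 0 := by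
  have hs0 : s + 0 * σ ≠ 0 := by simpa using hs.ne'
  have hDeriv := ((hasDerivAt_affine_rpow_mul (γ - 1) hs0 hg).const_mul (σ * γ)).add
    (hasDerivAt_affine_rpow_mul γ hs0 hg')
  have hPowOne : s ^ (γ - 1) = s ^ (γ - 2) * s := by
    rw [← Real.rpow_add_one hs.ne']
    congr 1
    ring
  have hPowTwo : s ^ γ = s ^ (γ - 2) * s ^ 2 := by
    rw [← Real.rpow_add_natCast hs.ne']
    norm_num
  refine hDeriv.congr_deriv ?_
  rw [zero_mul, add_zero, sub_sub, one_add_one_eq_two, hPowOne, hPowTwo]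
  ring

-- The mixed term is absorbed by expanding `0 ≤ ‖s • b + (2 * γ * σ) • a‖ ^ 2`.
lemma sq_add_sq_mul_norm_sq_le {a b : E} {s σ : ℝ}
    (hK : 1 + 4 * γ ^ 2 * ‖a‖ ^ 2 ≤ γ * (1 - γ) * (K - ‖a‖ ^ 2)) :
    σ ^ 2 + s ^ 2 * ‖b‖ ^ 2 ≤
      γ * (1 - γ) * (K - ‖a‖ ^ 2) * σ ^ 2 + 4 * γ * s * σ * ⟪a, b⟫ + 2 * s ^ 2 * ‖b‖ ^ 2 := by
  have hSquare : 0 ≤ s ^ 2 * ‖b‖ ^ 2 + 4 * γ * s * σ * ⟪a, b⟫ + 4 * γ ^ 2 * σ ^ 2 * ‖a‖ ^ 2 := by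
    have hNorm := sq_nonneg ‖s • b + (2 * γ * σ) • a‖
    rw [norm_add_sq_real, norm_smul, norm_smul, mul_pow, mul_pow, Real.norm_eq_abs,
      Real.norm_eq_abs, sq_abs, sq_abs, real_inner_smul_left, real_inner_smul_right,
      real_inner_comm] at hNorm
    linarith
  have hNormal := mul_le_mul_of_nonneg_right hK (sq_nonneg σ)
  linarith

lemma le_iteratedFDeriv_two_of_isLocalMin_sub_barrier {u : E → ℝ} {x : E}
    (hu : ContDiffAt ℝ 2 u x) (hM : 0 ≤ M) (hs : 0 < ⟪e, x - p⟫)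
    (hK : 1 + 4 * γ ^ 2 * ‖tangentialProj e (x - p)‖ ^ 2 ≤
      γ * (1 - γ) * (K - ‖tangentialProj e (x - p)‖ ^ 2))
    (hmin : IsLocalMin (fun y => u y - barrier p e γ K M y) x) (ξ : E) :
    M * ⟪e, x - p⟫ ^ (γ - 2) * (⟪e, ξ⟫ ^ 2 + ⟪e, x - p⟫ ^ 2 * ‖tangentialProj e ξ‖ ^ 2) ≤
      iteratedFDeriv ℝ 2 u x ![ξ, ξ] := by
  set s := ⟪e, x - p⟫
  set σ := ⟪e, ξ⟫
  set a := tangentialProj e (x - p)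
  set b := tangentialProj e ξ
  let g (t : ℝ) : ℝ := M * (‖a + t • b‖ ^ 2 - K)
  let g' (t : ℝ) : ℝ := M * (2 * ⟪a + t • b, b⟫)
  have hg (t : ℝ) : HasDerivAt g (g' t) t :=
    ((hasDerivAt_add_smul a b t).norm_sq.sub_const K).const_mul M
  have hg' : HasDerivAt g' (M * (2 * ‖b‖ ^ 2)) 0 := by
    simpa using (((hasDerivAt_add_smul a b 0).inner ℝ (hasDerivAt_const 0 b)).const_mul
      2).const_mul M
  have hPos : ∀ᶠ t in 𝓝 (0 : ℝ), 0 < s + t * σ :=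
    (tendsto_add_smul_zero s σ).eventually (lt_mem_nhds hs)
  have hFirst : ∀ᶠ t in 𝓝 (0 : ℝ), HasDerivAt (fun r : ℝ => barrier p e γ K M (x + r • ξ))
      (σ * γ * ((s + t * σ) ^ (γ - 1) * g t) + (s + t * σ) ^ γ * g' t) t := by
    filter_upwards [hPos] with t ht
    simpa only [barrier_add_smul] using hasDerivAt_affine_rpow_mul γ ht.ne' (hg t)
  refine le_trans ?_ (le_iteratedFDeriv_two_of_isLocalMin_sub hu hmin hFirst
    (hasDerivAt_deriv_affine_rpow_mul γ hs (hg 0) hg'))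
  have hQuad := mul_le_mul_of_nonneg_left (sq_add_sq_mul_norm_sq_le (s := s) (σ := σ) (b := b) hK)
    (show 0 ≤ M * s ^ (γ - 2) by positivity)
  simp only [g, g', zero_smul, add_zero]
  linarith

lemma pow_le_sq_mul_hessianDet_of_isLocalMin_sub_barrier {n : ℕ}
    {u : EuclideanSpace ℝ (Fin n) → ℝ} {p e x : EuclideanSpace ℝ (Fin n)}
    (hu : ContDiffAt ℝ 2 u x) (hM : 0 ≤ M) (he : ‖e‖ = 1) (hs : 0 < ⟪e, x - p⟫)
    (hK : 1 + 4 * γ ^ 2 * ‖tangentialProj e (x - p)‖ ^ 2 ≤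
      γ * (1 - γ) * (K - ‖tangentialProj e (x - p)‖ ^ 2))
    (hmin : IsLocalMin (fun y => u y - barrier p e γ K M y) x) :
    (M * ⟪e, x - p⟫ ^ γ) ^ n ≤ ⟪e, x - p⟫ ^ 2 * hessianDet u x := by
  have hDot (v w : EuclideanSpace ℝ (Fin n)) : v.ofLp ⬝ᵥ w.ofLp = ⟪v, w⟫ := by
    rw [EuclideanSpace.inner_eq_star_dotProduct, star_trivial, dotProduct_comm]
  have hDet := pow_card_le_sq_mul_det_of_anisotropic (isHermitian_hessianMatrix hu)
    (e := e.ofLp) (s := ⟪e, x - p⟫) (κ := M * ⟪e, x - p⟫ ^ (γ - 2))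
    (by rw [hDot, real_inner_self_eq_norm_sq, he, one_pow]) (by positivity) fun v => by
      have hForm := le_iteratedFDeriv_two_of_isLocalMin_sub_barrier hu hM hs hK hmin
        (WithLp.toLp 2 v)
      rwa [norm_tangentialProj_sq he, ← hDot e (WithLp.toLp 2 v), ← real_inner_self_eq_norm_sq,
        ← hDot (WithLp.toLp 2 v), ← dotProduct_hessianMatrix_mulVec] at hForm
  have hPow : M * ⟪e, x - p⟫ ^ (γ - 2) * ⟪e, x - p⟫ ^ 2 = M * ⟪e, x - p⟫ ^ γ := by
    rw [mul_assoc, ← Real.rpow_add_natCast hs.ne', Nat.cast_ofNat, sub_add_cancel]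
  rwa [hPow, Fintype.card_fin] at hDet

end Barrier

section ConvexDomain

lemma exists_unit_normal {E : Type*} [NormedAddCommGroup E] [InnerProductSpace ℝ E]
    [CompleteSpace E] {Ω : Set E} (hc : Convex ℝ Ω) (ho : IsOpen Ω) (hne : Ω.Nonempty) {p : E}
    (hp : p ∉ Ω) : ∃ e : E, ‖e‖ = 1 ∧ ∀ x ∈ Ω, 0 < ⟪e, x - p⟫ := by
  obtain ⟨f, hf⟩ := geometric_hahn_banach_point_open hc ho hp
  set g := (InnerProductSpace.toDual ℝ E).symm f with hg
  have hPos (x : E) (hx : x ∈ Ω) : 0 < ⟪g, x - p⟫ := by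
    rw [hg, InnerProductSpace.toDual_symm_apply, map_sub]
    exact sub_pos.2 (hf x hx)
  obtain ⟨x₀, hx₀⟩ := hne
  have hg0 : g ≠ 0 := by
    intro h
    simpa [h] using hPos x₀ hx₀
  refine ⟨‖g‖⁻¹ • g, norm_smul_inv_norm hg0, fun x hx => ?_⟩
  rw [real_inner_smul_left]
  exact mul_pos (inv_pos.2 (norm_pos_iff.2 hg0)) (hPos x hx)

lemma inner_sub_nonneg_of_mem_closure {E : Type*} [NormedAddCommGroup E] [InnerProductSpace ℝ E]
    {Ω : Set E} {p e x : E} (hs : ∀ y ∈ Ω, 0 ≤ ⟪e, y - p⟫) (hx : x ∈ closure Ω) :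
    0 ≤ ⟪e, x - p⟫ :=
  le_on_closure hs continuousOn_const (by fun_prop) hx

lemma infDist_frontier_le_inner {E : Type*} [NormedAddCommGroup E] [InnerProductSpace ℝ E]
    [FiniteDimensional ℝ E] {Ω : Set E} {p e x : E} (he : ‖e‖ = 1)
    (hs : ∀ y ∈ Ω, 0 < ⟪e, y - p⟫) (hx : x ∈ Ω) :
    Metric.infDist x (frontier Ω) ≤ ⟪e, x - p⟫ := by
  set z := x - ⟪e, x - p⟫ • e with hz
  have hzΩ : z ∉ Ω := by
    intro hmem
    have hHeight := hs z hmem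
    rw [hz, sub_right_comm, inner_sub_right, real_inner_smul_right, real_inner_self_eq_norm_sq,
      he, one_pow, mul_one, sub_self] at hHeight
    exact hHeight.false
  have hne : Ω ≠ Set.univ := fun h => hzΩ (h ▸ Set.mem_univ z)
  obtain ⟨y, hy, hyDist⟩ := exists_mem_frontier_infDist_compl_eq_dist hx hne
  calc Metric.infDist x (frontier Ω) ≤ dist x y := Metric.infDist_le_dist_of_mem hy
    _ = Metric.infDist x Ωᶜ := hyDist.symm
    _ ≤ dist x z := Metric.infDist_le_dist_of_mem hzΩ
    _ = ⟪e, x - p⟫ := by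
      rw [dist_eq_norm, hz, sub_sub_cancel, norm_smul, he, mul_one,
        Real.norm_of_nonneg (hs x hx).le]

lemma convexOn_closure_of_continuousOn {E : Type*} [NormedAddCommGroup E] [NormedSpace ℝ E]
    {Ω : Set E} {f : E → ℝ} (hf : ConvexOn ℝ Ω f) (hcont : ContinuousOn f (closure Ω)) :
    ConvexOn ℝ (closure Ω) f := by
  refine ⟨hf.1.closure, fun x hx y hy a b ha hb hab => ?_⟩
  have hcl : closure (Ω ×ˢ Ω) = closure Ω ×ˢ closure Ω := closure_prod_eq
  refine le_on_closure (s := Ω ×ˢ Ω) (f := fun q : E × E => f (a • q.1 + b • q.2))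
    (g := fun q : E × E => a • f q.1 + b • f q.2)
    (fun q hq => hf.2 hq.1 hq.2 ha hb hab) ?_ ?_ (x := (x, y)) (hcl ▸ ⟨hx, hy⟩)
  · rw [hcl]
    exact hcont.comp (by fun_prop) fun q hq => hf.1.closure hq.1 hq.2 ha hb hab
  · rw [hcl]
    exact ((hcont.comp continuousOn_fst fun q hq => hq.1).const_smul a).add
      ((hcont.comp continuousOn_snd fun q hq => hq.2).const_smul b)

lemma inter_frontier_nonempty_of_isPreconnected {X : Type*} [TopologicalSpace X] {s t : Set X}
    (ht : IsPreconnected t) (hs : (t ∩ s).Nonempty) (hsc : (t ∩ sᶜ).Nonempty) :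
    (t ∩ frontier s).Nonempty := by
  by_contra hempty
  have hcover : t ⊆ interior s ∪ interior sᶜ := by
    rw [← compl_frontier_eq_union_interior]
    exact fun x hx hfr => hempty ⟨x, hx, hfr⟩
  obtain ⟨x, hxt, hxs⟩ := hs
  obtain ⟨y, hyt, hys⟩ := hsc
  have hx : x ∈ interior s := (hcover hxt).resolve_right fun h => interior_subset h hxs
  have hy : y ∈ interior sᶜ := (hcover hyt).resolve_left fun h => hys (interior_subset h)
  obtain ⟨z, -, hz, hz'⟩ :=
    ht _ _ isOpen_interior isOpen_interior hcover ⟨x, hxt, hx⟩ ⟨y, hyt, hy⟩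
  exact interior_subset hz' (interior_subset hz)

lemma exists_one_le_add_smul_mem_frontier {E : Type*} [NormedAddCommGroup E] [NormedSpace ℝ E]
    {Ω : Set E} (hb : Bornology.IsBounded Ω) {x y : E} (hx : x ∈ Ω) (hxy : x ≠ y) :
    ∃ T : ℝ, 1 ≤ T ∧ y + T • (x - y) ∈ frontier Ω := by
  have hr : 0 < ‖x - y‖ := norm_pos_iff.2 (sub_ne_zero.2 hxy)
  obtain ⟨R, hR⟩ := hb.subset_closedBall y
  let ray (t : ℝ) : E := y + t • (x - y)
  have hRay : IsPreconnected (ray '' Set.Ici 1) :=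
    isPreconnected_Ici.image ray (by fun_prop)
  have hStart : ray 1 ∈ Ω := by simpa [ray] using hx
  have hFar : ray (1 + |R| / ‖x - y‖) ∉ Ω := by
    intro hmem
    have hle : ‖ray (1 + |R| / ‖x - y‖) - y‖ ≤ R := mem_closedBall_iff_norm.1 (hR hmem)
    rw [add_sub_cancel_left, norm_smul, Real.norm_of_nonneg (by positivity), add_mul, one_mul,
      div_mul_cancel₀ _ hr.ne'] at hle
    linarith [le_abs_self R]
  obtain ⟨_, ⟨T, hT, rfl⟩, hfr⟩ := inter_frontier_nonempty_of_isPreconnected hRay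
    ⟨_, Set.mem_image_of_mem ray Set.self_mem_Ici, hStart⟩
    ⟨_, Set.mem_image_of_mem ray (Set.mem_Ici.2 (le_add_of_nonneg_right (by positivity))), hFar⟩
  exact ⟨T, hT, hfr⟩

lemma nonempty_frontier_of_isBounded {E : Type*} [NormedAddCommGroup E] [NormedSpace ℝ E]
    [Nontrivial E] {Ω : Set E} (hb : Bornology.IsBounded Ω) (hne : Ω.Nonempty) :
    (frontier Ω).Nonempty :=
  nonempty_frontier_iff.2 ⟨hne, fun h => NormedSpace.unbounded_univ ℝ E (h ▸ hb)⟩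

lemma norm_sub_le_of_diam_le {E : Type*} [NormedAddCommGroup E] {Ω : Set E} {D : ℝ}
    (hb : Bornology.IsBounded Ω) (hdiam : Metric.diam Ω ≤ D) {x y : E} (hx : x ∈ closure Ω)
    (hy : y ∈ closure Ω) : ‖x - y‖ ≤ D := by
  rw [← dist_eq_norm]
  rw [← Metric.diam_closure] at hdiam
  exact (Metric.dist_le_diam_of_mem hb.closure hx hy).trans hdiam

end ConvexDomain

section BoundaryGrowthToHolder

variable {E : Type*} [NormedAddCommGroup E] [NormedSpace ℝ E] {Ω : Set E} {f : E → ℝ} {C γ : ℝ}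

lemma sub_le_mul_rpow_of_frontier_growth (hb : Bornology.IsBounded Ω)
    (hf : ConvexOn ℝ (closure Ω) f) (hzero : ∀ z ∈ frontier Ω, f z = 0) (hC : 0 ≤ C)
    (hγ : γ ≤ 1) (hgrowth : ∀ p ∈ frontier Ω, ∀ y ∈ closure Ω, -f y ≤ C * ‖y - p‖ ^ γ)
    {x y : E} (hx : x ∈ closure Ω) (hy : y ∈ closure Ω) : f x - f y ≤ C * ‖x - y‖ ^ γ := by
  rcases eq_or_ne x y with rfl | hxy
  · rw [sub_self]
    positivity
  rw [closure_eq_interior_union_frontier] at hx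
  rcases hx with hx | hx
  · obtain ⟨T, hT, hz⟩ := exists_one_le_add_smul_mem_frontier hb (interior_subset hx) hxy
    set z := y + T • (x - y) with hzdef
    have hT0 : 0 < T := zero_lt_one.trans_le hT
    have hxz : (1 - T⁻¹) • y + T⁻¹ • z = x := by
      rw [hzdef, smul_add, smul_smul, inv_mul_cancel₀ hT0.ne', one_smul, sub_smul, one_smul]
      abel
    have hConv : f x ≤ (1 - T⁻¹) * f y := by
      have hComb := hf.2 hy (frontier_subset_closure hz)
        (sub_nonneg.2 (inv_le_one_of_one_le₀ hT)) (inv_nonneg.2 hT0.le) (sub_add_cancel 1 T⁻¹)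
      simpa only [hxz, hzero z hz, smul_eq_mul, mul_zero, add_zero] using hComb
    have hyz : ‖y - z‖ = T * ‖x - y‖ := by
      rw [hzdef, sub_add_cancel_left, norm_neg, norm_smul, Real.norm_of_nonneg hT0.le]
    have hTγ : T ^ γ ≤ T := Real.rpow_le_self_of_one_le hT hγ
    calc f x - f y ≤ T⁻¹ * (-f y) := by linarith
      _ ≤ T⁻¹ * (C * ‖y - z‖ ^ γ) := by gcongr; exact hgrowth z hz y hy
      _ = T⁻¹ * (C * (T ^ γ * ‖x - y‖ ^ γ)) := by
        rw [hyz, Real.mul_rpow hT0.le (norm_nonneg _)]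
      _ ≤ T⁻¹ * (C * (T * ‖x - y‖ ^ γ)) := by gcongr
      _ = C * ‖x - y‖ ^ γ := by field_simp
  · rw [hzero x hx, zero_sub, norm_sub_rev]
    exact hgrowth x hx y hy

lemma abs_sub_le_mul_rpow_of_frontier_growth (hb : Bornology.IsBounded Ω)
    (hf : ConvexOn ℝ (closure Ω) f) (hzero : ∀ z ∈ frontier Ω, f z = 0) (hC : 0 ≤ C)
    (hγ : γ ≤ 1) (hgrowth : ∀ p ∈ frontier Ω, ∀ y ∈ closure Ω, -f y ≤ C * ‖y - p‖ ^ γ)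
    {x y : E} (hx : x ∈ closure Ω) (hy : y ∈ closure Ω) : |f x - f y| ≤ C * ‖x - y‖ ^ γ := by
  refine abs_sub_le_iff.2 ⟨sub_le_mul_rpow_of_frontier_growth hb hf hzero hC hγ hgrowth hx hy, ?_⟩
  rw [norm_sub_rev]
  exact sub_le_mul_rpow_of_frontier_growth hb hf hzero hC hγ hgrowth hy hx

end BoundaryGrowthToHolder

section Comparison

lemma le_on_closure_of_forall_not_isLocalMin_sub {X : Type*} [TopologicalSpace X] {Ω : Set X}
    {u v : X → ℝ} (ho : IsOpen Ω) (hcpt : IsCompact (closure Ω))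
    (hu : ContinuousOn u (closure Ω)) (hv : ContinuousOn v (closure Ω))
    (hbd : ∀ x ∈ frontier Ω, v x ≤ u x)
    (hint : ∀ x ∈ Ω, u x < v x → ¬IsLocalMin (fun y => u y - v y) x) :
    ∀ x ∈ closure Ω, v x ≤ u x := by
  intro x hx
  obtain ⟨x₀, hx₀, hmin⟩ := hcpt.exists_isMinOn ⟨x, hx⟩ (hu.sub hv)
  suffices h : v x₀ ≤ u x₀ from sub_nonneg.1 ((sub_nonneg.2 h).trans (hmin hx))
  by_contra! hlt
  have hx₀Ω : x₀ ∈ Ω := by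
    by_contra hnot
    exact hlt.not_ge (hbd x₀ (ho.frontier_eq ▸ ⟨hx₀, hnot⟩))
  exact hint x₀ hx₀Ω hlt (hmin.isLocalMin (mem_of_superset (ho.mem_nhds hx₀Ω) subset_closure))

lemma rpow_le_of_pow_le_sq_mul {n : ℕ} {A M s α β γ : ℝ} (hM : 0 < M) (hs : 0 < s)
    (h : (M * s ^ γ) ^ n ≤ s ^ 2 * (A * s ^ (β - n - 1) * (M * s ^ γ) ^ (-α))) :
    M ^ (n + α) ≤ A * s ^ (β - n + 1 - (n + α) * γ) := by
  have hN : 0 < M * s ^ γ := by positivity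
  have hPow : s ^ 2 * s ^ (β - n - 1) = s ^ (β - n + 1) := by
    rw [mul_comm, ← Real.rpow_add_natCast hs.ne']
    congr 1
    push_cast
    ring
  have hUncancelled : M ^ (n + α) * s ^ ((n + α) * γ) ≤
      A * s ^ (β - n + 1 - (n + α) * γ) * s ^ ((n + α) * γ) :=
    calc M ^ (n + α) * s ^ ((n + α) * γ)
        = (M * s ^ γ) ^ (n + α) := by
          rw [Real.mul_rpow hM.le (Real.rpow_nonneg hs.le γ), ← Real.rpow_mul hs.le, mul_comm γ]
      _ = (M * s ^ γ) ^ n * (M * s ^ γ) ^ α := by rw [Real.rpow_add hN, Real.rpow_natCast]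
      _ ≤ s ^ 2 * (A * s ^ (β - n - 1) * (M * s ^ γ) ^ (-α)) * (M * s ^ γ) ^ α := by gcongr
      _ = A * (s ^ 2 * s ^ (β - n - 1)) * ((M * s ^ γ) ^ (-α) * (M * s ^ γ) ^ α) := by ring
      _ = A * s ^ (β - n + 1) := by
        rw [hPow, ← Real.rpow_add hN, neg_add_cancel, Real.rpow_zero, mul_one]
      _ = A * s ^ (β - n + 1 - (n + α) * γ) * s ^ ((n + α) * γ) := by
        rw [mul_assoc, ← Real.rpow_add hs, sub_add_cancel]
  exact le_of_mul_le_mul_right hUncancelled (by positivity)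

end Comparison

section Supersolution

variable {n : ℕ}

/-- `u` is a convex classical supersolution, negative in `Ω` and vanishing on its boundary, of the
singular Monge-Ampère equation `det D²u = A d_x ^ (β - n - 1) |u| ^ (-α)`: the form in which the
equation `det D²u = F(x,u)` enters the comparison with the barrier. -/
structure IsSingularSupersolution (Ω : Set (EuclideanSpace ℝ (Fin n))) (A α β : ℝ)
    (u : EuclideanSpace ℝ (Fin n) → ℝ) : Prop where
  continuousOn : ContinuousOn u (closure Ω)
  convexOn : ConvexOn ℝ Ω u
  contDiffOn : ContDiffOn ℝ 2 u Ω
  neg : ∀ x ∈ Ω, u x < 0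
  eq_zero : ∀ x ∈ frontier Ω, u x = 0
  hessianDet_le : ∀ x ∈ Ω,
    hessianDet u x ≤ A * Metric.infDist x (frontier Ω) ^ (β - n - 1) * |u x| ^ (-α)

lemma IsClassicalSolution.isSingularSupersolution {Ω : Set (EuclideanSpace ℝ (Fin n))}
    {F : EuclideanSpace ℝ (Fin n) → ℝ → ℝ} {A α β : ℝ} {u : EuclideanSpace ℝ (Fin n) → ℝ}
    (hu : IsClassicalSolution Ω F u) (hF : SatisfiesFCond Ω F A α β) :
    IsSingularSupersolution Ω A α β u := by
  obtain ⟨hcont, hconv, hC2, hneg, hzero, hdet⟩ := hu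
  exact ⟨hcont, hconv, hC2, hneg, hzero,
    fun x hx => (hdet x hx).trans_le (hF.2.2 x hx (u x) (hneg x hx)).2⟩

namespace IsSingularSupersolution

variable {Ω : Set (EuclideanSpace ℝ (Fin n))} {A α β γ K M D : ℝ}
  {u : EuclideanSpace ℝ (Fin n) → ℝ} {p e x : EuclideanSpace ℝ (Fin n)}

lemma nonpos (hu : IsSingularSupersolution Ω A α β u) (ho : IsOpen Ω) (hx : x ∈ closure Ω) :
    u x ≤ 0 := by
  rw [closure_eq_interior_union_frontier, ho.interior_eq] at hx
  exact hx.elim (fun h => (hu.neg x h).le) fun h => (hu.eq_zero x h).le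

lemma rpow_le_of_isLocalMin_sub_barrier (hu : IsSingularSupersolution Ω A α β u) (ho : IsOpen Ω)
    (hA : 0 ≤ A) (hα : 0 ≤ α) (hβ : (n : ℝ) + 1 ≤ β) (hM : 0 < M)
    (hK : 1 + 4 * γ ^ 2 * ‖tangentialProj e (x - p)‖ ^ 2 ≤
      γ * (1 - γ) * (K - ‖tangentialProj e (x - p)‖ ^ 2))
    (hK1 : ‖x - p‖ ^ 2 + 1 ≤ K) (he : ‖e‖ = 1) (hs : ∀ y ∈ Ω, 0 < ⟪e, y - p⟫) (hx : x ∈ Ω)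
    (hlt : u x < barrier p e γ K M x)
    (hmin : IsLocalMin (fun y => u y - barrier p e γ K M y) x) :
    M ^ (n + α) ≤ A * ⟪e, x - p⟫ ^ (β - n + 1 - (n + α) * γ) := by
  have hsx := hs x hx
  have hAbs : M * ⟪e, x - p⟫ ^ γ ≤ |u x| := by
    rw [abs_of_neg (hu.neg x hx)]
    linarith [barrier_le_neg (γ := γ) hM.le hsx.le hK1]
  refine rpow_le_of_pow_le_sq_mul hM hsx ?_
  calc (M * ⟪e, x - p⟫ ^ γ) ^ n
      ≤ ⟪e, x - p⟫ ^ 2 * hessianDet u x :=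
        pow_le_sq_mul_hessianDet_of_isLocalMin_sub_barrier
          (hu.contDiffOn.contDiffAt (ho.mem_nhds hx)) hM.le he hsx hK hmin
    _ ≤ ⟪e, x - p⟫ ^ 2 *
        (A * Metric.infDist x (frontier Ω) ^ (β - n - 1) * |u x| ^ (-α)) := by
        gcongr
        exact hu.hessianDet_le x hx
    _ ≤ ⟪e, x - p⟫ ^ 2 *
        (A * ⟪e, x - p⟫ ^ (β - n - 1) * (M * ⟪e, x - p⟫ ^ γ) ^ (-α)) := by
        have hDist := Real.rpow_le_rpow Metric.infDist_nonneg (infDist_frontier_le_inner he hs hx)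
          (show 0 ≤ β - n - 1 by linarith)
        have hValue := Real.rpow_le_rpow_of_nonpos (by positivity) hAbs (neg_nonpos.2 hα)
        gcongr

lemma barrier_le (hu : IsSingularSupersolution Ω A α β u) (ho : IsOpen Ω)
    (hb : Bornology.IsBounded Ω) (hn : 0 < n) (hA : 0 ≤ A) (hα : 0 ≤ α)
    (hβ : (n : ℝ) + 1 ≤ β) (hγ₀ : 0 < γ) (hγ₁ : γ < 1) (hγ : (n + α) * γ ≤ β - n + 1)
    (hK : 1 + 4 * γ ^ 2 * D ^ 2 ≤ γ * (1 - γ) * (K - D ^ 2)) (hK1 : D ^ 2 + 1 ≤ K)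
    (hM1 : 1 ≤ M) (hM : A * D ^ (β - n + 1 - (n + α) * γ) < M) (he : ‖e‖ = 1)
    (hs : ∀ y ∈ Ω, 0 < ⟪e, y - p⟫) (hD : ∀ y ∈ closure Ω, ‖y - p‖ ≤ D) :
    ∀ y ∈ closure Ω, barrier p e γ K M y ≤ u y := by
  have hK1' (y) (hy : y ∈ closure Ω) : ‖y - p‖ ^ 2 + 1 ≤ K :=
    le_trans (by gcongr; exact hD y hy) hK1
  refine le_on_closure_of_forall_not_isLocalMin_sub ho hb.isCompact_closure hu.continuousOn
    (continuous_barrier hγ₀.le).continuousOn (fun y hy => ?_) fun y hy hlt hmin => ?_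
  · have hyc := frontier_subset_closure hy
    have hsy : 0 ≤ ⟪e, y - p⟫ := inner_sub_nonneg_of_mem_closure (fun z hz => (hs z hz).le) hyc
    rw [hu.eq_zero y hy]
    exact (barrier_le_neg (by linarith) hsy (hK1' y hyc)).trans (neg_nonpos.2 (by positivity))
  · have hyD := hD y (subset_closure hy)
    have hTangential : ‖tangentialProj e (y - p)‖ ^ 2 ≤ D ^ 2 := by
      gcongr
      exact (Submodule.norm_starProjection_apply_le _ _).trans hyD
    have hKy : 1 + 4 * γ ^ 2 * ‖tangentialProj e (y - p)‖ ^ 2 ≤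
        γ * (1 - γ) * (K - ‖tangentialProj e (y - p)‖ ^ 2) := by
      have hγγ : 0 ≤ γ * (1 - γ) := mul_nonneg hγ₀.le (sub_nonneg.2 hγ₁.le)
      exact le_trans (by gcongr) (hK.trans (mul_le_mul_of_nonneg_left (by linarith) hγγ))
    have hTouch := hu.rpow_le_of_isLocalMin_sub_barrier ho hA hα hβ (by linarith) hKy
      (hK1' y (subset_closure hy)) he hs hy hlt hmin
    have hHeight : ⟪e, y - p⟫ ≤ D := by
      simpa [he] using (real_inner_le_norm e (y - p)).trans (by simpa [he] using hyD)
    have hExponent : 1 ≤ n + α := by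
      have : (1 : ℝ) ≤ n := by exact_mod_cast hn
      linarith
    exact absurd hM (not_lt.2 <|
      calc M ≤ M ^ (n + α) := Real.self_le_rpow_of_one_le hM1 hExponent
        _ ≤ A * ⟪e, y - p⟫ ^ (β - n + 1 - (n + α) * γ) := hTouch
        _ ≤ A * D ^ (β - n + 1 - (n + α) * γ) := by
          have := hs y hy
          gcongr)

lemma neg_le_mul_rpow (hu : IsSingularSupersolution Ω A α β u) (ho : IsOpen Ω)
    (hb : Bornology.IsBounded Ω) (hdiam : Metric.diam Ω ≤ D) (hn : 0 < n) (hA : 0 ≤ A)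
    (hα : 0 ≤ α) (hβ : (n : ℝ) + 1 ≤ β) (hγ₀ : 0 < γ) (hγ₁ : γ < 1)
    (hγ : (n + α) * γ ≤ β - n + 1)
    (hK : 1 + 4 * γ ^ 2 * D ^ 2 ≤ γ * (1 - γ) * (K - D ^ 2)) (hK1 : D ^ 2 + 1 ≤ K)
    (hM1 : 1 ≤ M) (hM : A * D ^ (β - n + 1 - (n + α) * γ) < M) (hp : p ∈ frontier Ω)
    (hx : x ∈ closure Ω) : -u x ≤ M * K * ‖x - p‖ ^ γ := by
  have hpc := frontier_subset_closure hp
  have hpΩ : p ∉ Ω := (ho.frontier_eq ▸ hp).2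
  obtain ⟨e, he, hs⟩ := exists_unit_normal hu.convexOn.1 ho (closure_nonempty_iff.1 ⟨p, hpc⟩) hpΩ
  have hsx : 0 ≤ ⟪e, x - p⟫ := inner_sub_nonneg_of_mem_closure (fun z hz => (hs z hz).le) hx
  have hLower := hu.barrier_le ho hb hn hA hα hβ hγ₀ hγ₁ hγ hK hK1 hM1 hM he hs
    (fun y hy => norm_sub_le_of_diam_le hb hdiam hy hpc) x hx
  exact (neg_le_neg hLower).trans
    (neg_barrier_le (by linarith) (by linarith [sq_nonneg D]) hγ₀.le he hsx)

end IsSingularSupersolution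

lemma exists_frontier_growth_const {A α β γ : ℝ} (hn : 0 < n) (D : ℝ) (hA : 0 ≤ A) (hα : 0 ≤ α)
    (hβ : (n : ℝ) + 1 ≤ β) (hγ₀ : 0 < γ) (hγ₁ : γ < 1) (hγ : (n + α) * γ ≤ β - n + 1) :
    ∃ C : ℝ, 0 < C ∧ ∀ (Ω : Set (EuclideanSpace ℝ (Fin n))) (u : EuclideanSpace ℝ (Fin n) → ℝ),
      IsOpen Ω → Bornology.IsBounded Ω → Metric.diam Ω ≤ D → IsSingularSupersolution Ω A α β u →
      ∀ p ∈ frontier Ω, ∀ x ∈ closure Ω, -u x ≤ C * ‖x - p‖ ^ γ := by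
  have hγγ : 0 < γ * (1 - γ) := mul_pos hγ₀ (sub_pos.2 hγ₁)
  set K := D ^ 2 + (1 + 4 * γ ^ 2 * D ^ 2) / (γ * (1 - γ)) with hKdef
  have hK : 1 + 4 * γ ^ 2 * D ^ 2 = γ * (1 - γ) * (K - D ^ 2) := by
    rw [hKdef, add_sub_cancel_left, mul_div_cancel₀ _ hγγ.ne']
  have hK1 : D ^ 2 + 1 ≤ K := by
    rw [hKdef, add_le_add_iff_left, one_le_div hγγ]
    nlinarith [sq_nonneg (γ * D), sq_nonneg γ]
  set M := max 1 (A * D ^ (β - n + 1 - (n + α) * γ) + 1)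
  have hM1 : 1 ≤ M := le_max_left _ _
  have hM : A * D ^ (β - n + 1 - (n + α) * γ) < M := (lt_add_one _).trans_le (le_max_right _ _)
  exact ⟨M * K, mul_pos (by linarith) (by linarith [sq_nonneg D]),
    fun Ω u ho hb hdiam hu p hp x hx =>
      hu.neg_le_mul_rpow ho hb hdiam hn hA hα hβ hγ₀ hγ₁ hγ hK.le hK1 hM1 hM hp hx⟩

end Supersolution

lemma holder_exponent_bounds {n α β γ : ℝ} (hn : 0 < n + α) (hβ : 0 < β - n + 1)
    (hγ : (β < α + 2 * n - 1 ∧ γ = (β - n + 1) / (n + α)) ∨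
      (α + 2 * n - 1 ≤ β ∧ γ ∈ Set.Ioo (0 : ℝ) 1)) :
    0 < γ ∧ γ < 1 ∧ (n + α) * γ ≤ β - n + 1 := by
  rcases hγ with ⟨hlt, rfl⟩ | ⟨hle, hγ₀, hγ₁⟩
  · exact ⟨div_pos hβ hn, (div_lt_one hn).2 (by linarith), (mul_div_cancel₀ _ hn.ne').le⟩
  · exact ⟨hγ₀, hγ₁, by nlinarith⟩

theorem global_holder_regularity_general {n : ℕ} (hn : 0 < n) {A α β γ : ℝ} (D : ℝ) (hA : 0 ≤ A)
    (hα : 0 ≤ α) (hβ : (n : ℝ) + 1 ≤ β) (hγ₀ : 0 < γ) (hγ₁ : γ < 1)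
    (hγ : (n + α) * γ ≤ β - n + 1) :
    ∃ C : ℝ, 0 < C ∧ ∀ (Ω : Set (EuclideanSpace ℝ (Fin n))) (u : EuclideanSpace ℝ (Fin n) → ℝ),
      IsOpen Ω → Bornology.IsBounded Ω → Metric.diam Ω ≤ D → IsSingularSupersolution Ω A α β u →
      (∀ z ∈ closure Ω, |u z| ≤ C) ∧
        ∀ x ∈ closure Ω, ∀ y ∈ closure Ω, |u x - u y| ≤ C * ‖x - y‖ ^ γ := by
  obtain ⟨C, hC, hgrowth⟩ := exists_frontier_growth_const hn D hA hα hβ hγ₀ hγ₁ hγ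
  refine ⟨C * max 1 (D ^ γ), by positivity, fun Ω u ho hb hdiam hu => ⟨fun z hz => ?_, ?_⟩⟩
  · have : NeZero n := ⟨hn.ne'⟩
    obtain ⟨p, hp⟩ := nonempty_frontier_of_isBounded hb (closure_nonempty_iff.1 ⟨z, hz⟩)
    have hzp := norm_sub_le_of_diam_le hb hdiam hz (frontier_subset_closure hp)
    calc |u z| = -u z := abs_of_nonpos (hu.nonpos ho hz)
      _ ≤ C * ‖z - p‖ ^ γ := hgrowth Ω u ho hb hdiam hu p hp z hz
      _ ≤ C * D ^ γ := by gcongr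
      _ ≤ C * max 1 (D ^ γ) := by gcongr; exact le_max_right _ _
  · intro x hx y hy
    calc |u x - u y| ≤ C * ‖x - y‖ ^ γ :=
          abs_sub_le_mul_rpow_of_frontier_growth hb
            (convexOn_closure_of_continuousOn hu.convexOn hu.continuousOn) hu.eq_zero hC.le
            hγ₁.le (hgrowth Ω u ho hb hdiam hu) hx hy
      _ ≤ C * max 1 (D ^ γ) * ‖x - y‖ ^ γ := by
          gcongr
          exact le_mul_of_one_le_right hC.le (le_max_left _ _)

/-- Theorem 1.1 (regularity part): every classical solution is `γ₁`-Hölder continuous on the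
closure of `Ω`, with `C^{γ₁}`-norm bounded by a constant depending only on
`α, β, A, diam Ω` (through the bound `D`) and `n`. -/
theorem global_holder_regularity
    (n : ℕ) (hn : 2 ≤ n) (A α β D γ₁ : ℝ) (hA : 0 < A) (hα : 0 ≤ α)
    (hβ : (n : ℝ) + 1 ≤ β)
    (hγ₁ : (β < α + 2 * n - 1 ∧ γ₁ = (β - n + 1) / (n + α)) ∨
      (α + 2 * n - 1 ≤ β ∧ γ₁ ∈ Set.Ioo (0 : ℝ) 1)) :
    ∃ C : ℝ, 0 < C ∧
      ∀ (Ω : Set (EuclideanSpace ℝ (Fin n))) (F : EuclideanSpace ℝ (Fin n) → ℝ → ℝ)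
        (u : EuclideanSpace ℝ (Fin n) → ℝ),
        IsOpen Ω → Convex ℝ Ω → Bornology.IsBounded Ω → Ω.Nonempty →
        Metric.diam Ω ≤ D →
        SatisfiesFCond Ω F A α β →
        IsClassicalSolution Ω F u →
        (∀ z ∈ closure Ω, |u z| ≤ C) ∧
          ∀ x ∈ closure Ω, ∀ y ∈ closure Ω, |u x - u y| ≤ C * ‖x - y‖ ^ γ₁ := by
  have hn₂ : (2 : ℝ) ≤ n := by exact_mod_cast hn
  obtain ⟨hγ₀, hγlt, hγle⟩ := holder_exponent_bounds (by linarith) (by linarith) hγ₁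
  obtain ⟨C, hC, hreg⟩ :=
    global_holder_regularity_general (by omega) D hA.le hα hβ hγ₀ hγlt hγle
  exact ⟨C, hC, fun Ω F u ho _ hb _ hdiam hF hu =>
    hreg Ω u ho hb hdiam (hu.isSingularSupersolution hF)⟩
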